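/- arXiv:2310.18882 — 6 statements merged into one kernel-verified Lean document; each statement's English description precedes it below -/
import Mathlib

section
/- Let n, K, s be positive integers with K·s ≥ n, with n dividing K·s, and with s ≤ n. Then every real n×n matrix W with rank(W) ≤ K·s/n belongs to GBLR(n,K,s). -/
open Matrix BigOperators

/-- The boxcar mask of length `n`, width `w`, location `l`:
`m_{(w,l)}[j] = 1` if `(j - l) mod n < w`, else `0`. -/
noncomputable def boxcar (n w l : ℕ) : Fin n → ℝ :=
  fun j => if ((j : ℤ) - (l : ℤ)) % (n : ℤ) < (w : ℤ) then 1 else 0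

/-- `W ∈ GBLR(n,K,s)`: `W` is a sum of `K` masked rank-one blocks whose
widths sum to at most `2Ks`. -/
noncomputable def InGBLR (n K s : ℕ) (W : Matrix (Fin n) (Fin n) ℝ) : Prop :=
  ∃ (wR wC lR lC : Fin K → ℕ) (u v : Fin K → Fin n → ℝ),
    (∀ k, wR k ≤ n) ∧ (∀ k, wC k ≤ n) ∧ (∀ k, lR k < n) ∧ (∀ k, lC k < n) ∧
    W = ∑ k, Matrix.vecMulVec (fun i => boxcar n (wR k) (lR k) i * u k i)
          (fun j => boxcar n (wC k) (lC k) j * v k j) ∧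
    ∑ k, (wR k + wC k) ≤ 2 * K * s

/-!
A rank-one block whose two boxcars have full width is an arbitrary rank-one matrix and costs width
`2n`. A matrix of rank `r` is a sum of `r` rank-one matrices, so it costs `2rn ≤ 2Ks` in total;
the remaining `K - r` blocks are taken to be zero, at no cost.
-/

theorem exists_eq_sum_vecMulVec {R m n : Type*} [CommRing R] [IsDomain R]
    [IsPrincipalIdealRing R] [Fintype n] (A : Matrix m n R) :
    ∃ (u : Fin A.rank → m → R) (v : Fin A.rank → n → R), A = ∑ k, vecMulVec (u k) (v k) := by
  classical
  let b : Module.Basis (Fin A.rank) R (LinearMap.range A.mulVecLin) := Module.finBasis R _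
  let column (j : n) : LinearMap.range A.mulVecLin := A.mulVecLin.rangeRestrict (Pi.single j 1)
  refine ⟨fun k => b k, fun k j => b.repr (column j) k, ?_⟩
  ext i j
  calc
    A i j = (column j : m → R) i := by simp [column]
    _ = ((∑ k, b.repr (column j) k • b k : LinearMap.range A.mulVecLin) : m → R) i := by
      rw [b.sum_repr]
    _ = (∑ k, vecMulVec (b k : m → R) fun j => b.repr (column j) k) i j := by
      simp [-Module.Basis.sum_repr, Matrix.sum_apply, vecMulVec_apply, mul_comm]

theorem boxcar_self (n l : ℕ) : boxcar n n l = 1 := by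
  ext i
  exact if_pos (Int.emod_lt_of_pos _ (by exact_mod_cast i.pos))

theorem inGBLR_sum_vecMulVec {n K : ℕ} (hn : 0 < n) (u v : Fin K → Fin n → ℝ) :
    InGBLR n K n (∑ k, vecMulVec (u k) (v k)) := by
  refine ⟨fun _ => n, fun _ => n, fun _ => 0, fun _ => 0, u, v, fun _ => le_rfl, fun _ => le_rfl,
    fun _ => hn, fun _ => hn, ?_, ?_⟩
  · simp [boxcar_self]
  · simp only [Finset.sum_const, Finset.card_univ, Fintype.card_fin, smul_eq_mul]
    linarith

theorem InGBLR.mono {n K K' s s' : ℕ} {W : Matrix (Fin n) (Fin n) ℝ} (h : InGBLR n K s W)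
    (hn : 0 < n) (hK : K ≤ K') (hKs : K * s ≤ K' * s') : InGBLR n K' s' W := by
  obtain ⟨wR, wC, lR, lC, u, v, hwR, hwC, hlR, hlC, rfl, hsum⟩ := h
  obtain ⟨d, rfl⟩ := Nat.exists_eq_add_of_le hK
  refine ⟨Fin.append wR 0, Fin.append wC 0, Fin.append lR 0, Fin.append lC 0,
    Fin.append u 0, Fin.append v 0, ?_, ?_, ?_, ?_, ?_, ?_⟩
  · simpa [Fin.forall_fin_add] using hwR
  · simpa [Fin.forall_fin_add] using hwC
  · simpa [Fin.forall_fin_add, hn] using hlR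
  · simpa [Fin.forall_fin_add, hn] using hlC
  · ext i j
    simp [Fin.sum_univ_add, Matrix.sum_apply, vecMulVec_apply]
  · calc
      _ = ∑ k, (wR k + wC k) := by simp [Fin.sum_univ_add]
      _ ≤ 2 * K * s := hsum
      _ ≤ 2 * (K + d) * s' := by linarith

theorem lowRank_mem_GBLR_general {n K s : ℕ} (hn : 0 < n) (W : Matrix (Fin n) (Fin n) ℝ)
    (hrank : W.rank ≤ K) (hcost : W.rank * n ≤ K * s) : InGBLR n K s W := by
  obtain ⟨u, v, hW⟩ := exists_eq_sum_vecMulVec W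
  have hfull : InGBLR n W.rank n W := by
    simpa only [← hW] using inGBLR_sum_vecMulVec hn u v
  exact hfull.mono hn hrank hcost

/-- Any rank-`Ks/n` matrix is `(n,K,s)`-GBLR. -/
theorem lowRank_mem_GBLR (n K s : ℕ) (hn : 0 < n) (hK : 0 < K) (hs : 0 < s)
    (hge : n ≤ K * s) (hdvd : n ∣ K * s) (hsn : s ≤ n)
    (W : Matrix (Fin n) (Fin n) ℝ) (hrank : W.rank ≤ K * s / n) :
    InGBLR n K s W := by
  have hcost : W.rank * n ≤ K * s := (Nat.le_div_iff_mul_le hn).1 hrank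
  exact lowRank_mem_GBLR_general hn W
    (Nat.le_of_mul_le_mul_right (hcost.trans (Nat.mul_le_mul_left K hsn)) hn) hcost
end

section
/- Let n, K, s be positive integers with s dividing K and s ≤ n. Then every (n, K/s, s)-block-sparse real matrix belongs to GBLR(n,K,s). -/
open Matrix BigOperators

/-- `j` belongs to the cyclic window of width `w` starting at `l` (mod `n`). -/
def inWindow (n w l : ℕ) (j : Fin n) : Prop :=
  ((j : ℤ) - (l : ℤ)) % (n : ℤ) < (w : ℤ)

/-- `W` is `(n,m,s)`-block-sparse: all nonzero entries of `W` lie in `m`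
pairwise non-overlapping blocks (cyclic-consecutive row and column index sets),
each of dimension at most `s × s`. -/
def IsBlockSparse (n m s : ℕ) (W : Matrix (Fin n) (Fin n) ℝ) : Prop :=
  ∃ (rW cW rL cL : Fin m → ℕ),
    (∀ t, rW t ≤ s) ∧ (∀ t, cW t ≤ s) ∧ (∀ t, rL t < n) ∧ (∀ t, cL t < n) ∧
    (∀ i j, W i j ≠ 0 →
      ∃ t, inWindow n (rW t) (rL t) i ∧ inWindow n (cW t) (cL t) j) ∧
    (∀ t t', t ≠ t' →
      ¬ ∃ i j, (inWindow n (rW t) (rL t) i ∧ inWindow n (cW t) (cL t) j) ∧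
        (inWindow n (rW t') (rL t') i ∧ inWindow n (cW t') (cL t') j))

/-!
A matrix supported on one row, within a cyclic window of columns, is a single masked rank-one term
whose row mask has width `1`. So a block with at most `s` rows costs at most `s` terms, and `m`
blocks cost at most `m * s`. Each term has total width at most `1 + s ≤ 2 * s`, so both the number
of terms and the width budget are respected.
-/

theorem boxcar_of_inWindow {n w l : ℕ} {j : Fin n} (h : inWindow n w l j) :
    boxcar n w l j = 1 :=
  if_pos h

theorem boxcar_of_not_inWindow {n w l : ℕ} {j : Fin n} (h : ¬ inWindow n w l j) :
    boxcar n w l j = 0 :=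
  if_neg h

theorem injective_sub_emod (n : ℕ) (l : ℤ) :
    Function.Injective fun j : Fin n => ((j : ℤ) - l) % n := by
  intro i j hij
  have hmod : (i : ℤ) ≡ j [ZMOD n] := Int.ModEq.add_right_cancel' (-l) hij
  exact Fin.ext (Nat.ModEq.eq_of_lt_of_lt (Int.natCast_modEq_iff.mp hmod) i.isLt j.isLt)

theorem inWindow_one_iff {n : ℕ} {i j : Fin n} : inWindow n 1 i j ↔ j = i := by
  have hnonneg : 0 ≤ ((j : ℤ) - i) % n := Int.emod_nonneg _ (by have := i.pos; omega)
  calc inWindow n 1 i j ↔ ((j : ℤ) - i) % n = ((i : ℤ) - i) % n := by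
        rw [inWindow, sub_self, Int.zero_emod]; omega
    _ ↔ j = i := (injective_sub_emod n i).eq_iff

theorem inWindow_min_iff {n w l : ℕ} {j : Fin n} :
    inWindow n (min w n) l j ↔ inWindow n w l j := by
  have hlt : ((j : ℤ) - l) % n < n := Int.emod_lt_of_pos _ (by have := j.pos; omega)
  simp only [inWindow, Nat.cast_min, lt_inf_iff, hlt, and_true]

theorem card_le_of_forall_inWindow {n w l : ℕ} {S : Finset (Fin n)}
    (hS : ∀ i ∈ S, inWindow n w l i) : S.card ≤ w := by
  have hmaps : Set.MapsTo (fun i : Fin n => ((i : ℤ) - l) % n) S (Finset.Ico (0 : ℤ) w) :=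
    fun i hi => Finset.mem_coe.mpr <| Finset.mem_Ico.mpr
      ⟨Int.emod_nonneg _ (by have := i.pos; omega), hS i hi⟩
  simpa using Finset.card_le_card_of_injOn _ hmaps (injective_sub_emod n l).injOn

theorem exists_sum_eq_of_forall_exists {ι m n M : Type*} [Fintype ι] [AddCommMonoid M]
    {W : Matrix m n M} {P : ι → m → n → Prop} (hW : ∀ i j, W i j ≠ 0 → ∃ t, P t i j) :
    ∃ B : ι → Matrix m n M, (∀ t i j, B t i j ≠ 0 → P t i j) ∧ ∑ t, B t = W := by
  classical
  choose owner howner using hW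
  -- Overlaps are harmless: each nonzero entry is given to a single one of the regions holding it.
  refine ⟨fun t => .of fun i j => if ∃ h, owner i j h = t then W i j else 0,
    fun t i j hij => ?_, ?_⟩
  · obtain ⟨⟨h, rfl⟩, -⟩ := ite_ne_right_iff.mp hij
    exact howner i j h
  · ext i j
    by_cases h : W i j = 0 <;> simp [Matrix.sum_apply, h]

namespace InGBLR

variable {n K K' s : ℕ} {W W' : Matrix (Fin n) (Fin n) ℝ}

theorem zero (hn : 0 < n) : InGBLR n K s 0 :=
  ⟨0, 0, 0, 0, 0, 0, fun _ => n.zero_le, fun _ => n.zero_le, fun _ => hn, fun _ => hn,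
    by ext; simp [Matrix.sum_apply, Matrix.vecMulVec_apply], by simp⟩

theorem add (hW : InGBLR n K s W) (hW' : InGBLR n K' s W') :
    InGBLR n (K + K') s (W + W') := by
  obtain ⟨wR, wC, lR, lC, u, v, hwR, hwC, hlR, hlC, rfl, hsum⟩ := hW
  obtain ⟨wR', wC', lR', lC', u', v', hwR', hwC', hlR', hlC', rfl, hsum'⟩ := hW'
  refine ⟨Fin.append wR wR', Fin.append wC wC', Fin.append lR lR', Fin.append lC lC',
    Fin.append u u', Fin.append v v', ?_, ?_, ?_, ?_, ?_, ?_⟩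
  · exact Fin.addCases (by simpa using hwR) (by simpa using hwR')
  · exact Fin.addCases (by simpa using hwC) (by simpa using hwC')
  · exact Fin.addCases (by simpa using hlR) (by simpa using hlR')
  · exact Fin.addCases (by simpa using hlC) (by simpa using hlC')
  · simp only [Fin.sum_univ_add, Fin.append_left, Fin.append_right]
  · simp only [Fin.sum_univ_add, Fin.append_left, Fin.append_right]
    linarith

theorem mono_s1 (hn : 0 < n) (hK : K ≤ K') (hW : InGBLR n K s W) : InGBLR n K' s W := by
  obtain ⟨d, rfl⟩ := Nat.exists_eq_add_of_le hK
  simpa only [add_zero] using hW.add (zero (K := d) hn)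

theorem sum {ι : Type*} {T : Finset ι} {k : ι → ℕ} {B : ι → Matrix (Fin n) (Fin n) ℝ}
    (hB : ∀ t ∈ T, InGBLR n (k t) s (B t)) :
    InGBLR n (∑ t ∈ T, k t) s (∑ t ∈ T, B t) := by
  induction T using Finset.cons_induction with
  | empty =>
    simp only [Finset.sum_empty]
    exact ⟨0, 0, 0, 0, 0, 0, nofun, nofun, nofun, nofun, by simp, by simp⟩
  | cons t T ht ih =>
    rw [Finset.forall_mem_cons] at hB
    simpa only [Finset.sum_cons] using hB.1.add (ih hB.2)

theorem of_row {w l : ℕ} {r : Fin n} (hw : w < 2 * s) (hl : l < n)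
    (hW : ∀ i j, W i j ≠ 0 → i = r ∧ inWindow n w l j) : InGBLR n 1 s W := by
  refine ⟨fun _ => 1, fun _ => min w n, fun _ => r, fun _ => l, fun _ _ => 1, fun _ => W r,
    fun _ => r.pos, fun _ => min_le_right w n, fun _ => r.isLt, fun _ => hl, ?_, ?_⟩
  · ext i j
    simp only [Fin.sum_univ_one, Matrix.vecMulVec_apply, mul_one]
    by_cases hij : i = r ∧ inWindow n w l j
    · obtain ⟨rfl, hj⟩ := hij
      rw [boxcar_of_inWindow (inWindow_one_iff.mpr rfl),
        boxcar_of_inWindow (inWindow_min_iff.mpr hj), one_mul, one_mul]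
    · rw [not_imp_comm.mp (hW i j) hij]
      rcases not_and_or.mp hij with hi | hj
      · rw [boxcar_of_not_inWindow (mt inWindow_one_iff.mp hi), zero_mul]
      · rw [boxcar_of_not_inWindow (mt inWindow_min_iff.mp hj), zero_mul, mul_zero]
  · simp only [Fin.sum_univ_one]
    omega

end InGBLR

theorem blockSparse_mem_GBLR_general {ι : Type*} [Fintype ι] {n K s : ℕ} (hn : 0 < n)
    {W : Matrix (Fin n) (Fin n) ℝ} {R : ι → Finset (Fin n)} {w l : ι → ℕ}
    (hR : ∑ t, (R t).card ≤ K) (hw : ∀ t, w t < 2 * s) (hl : ∀ t, l t < n)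
    (hW : ∀ i j, W i j ≠ 0 → ∃ t, i ∈ R t ∧ inWindow n (w t) (l t) j) : InGBLR n K s W := by
  have hrow : ∀ i j, W i j ≠ 0 →
      ∃ p : Σ t, R t, i = p.2 ∧ inWindow n (w p.1) (l p.1) j := fun i j hij => by
    obtain ⟨t, hi, hj⟩ := hW i j hij
    exact ⟨⟨t, i, hi⟩, rfl, hj⟩
  obtain ⟨B, hB, rfl⟩ := exists_sum_eq_of_forall_exists hrow
  have hcard : ∑ _p : Σ t, R t, 1 ≤ K := by simpa using hR
  exact (InGBLR.sum fun p _ => InGBLR.of_row (hw p.1) (hl p.1) (hB p)).mono_s1 hn hcard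

theorem IsBlockSparse.exists_row_sets {n m s : ℕ} {W : Matrix (Fin n) (Fin n) ℝ}
    (hW : IsBlockSparse n m s W) :
    ∃ (R : Fin m → Finset (Fin n)) (w l : Fin m → ℕ),
      ∑ t, (R t).card ≤ m * s ∧ (∀ t, w t ≤ s) ∧ (∀ t, l t < n) ∧
      ∀ i j, W i j ≠ 0 → ∃ t, i ∈ R t ∧ inWindow n (w t) (l t) j := by
  classical
  obtain ⟨rW, cW, rL, cL, hrW, hcW, -, hcL, hcover, -⟩ := hW
  let R (t : Fin m) : Finset (Fin n) := {i | inWindow n (rW t) (rL t) i}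
  have hcard (t : Fin m) : (R t).card ≤ s :=
    (card_le_of_forall_inWindow fun _ hi => (Finset.mem_filter.mp hi).2).trans (hrW t)
  refine ⟨R, cW, cL, ?_, hcW, hcL, by simpa [R] using hcover⟩
  simpa using Finset.sum_le_card_nsmul Finset.univ _ s fun t _ => hcard t

/-- Any `(n, K/s, s)`-block-sparse matrix is `(n,K,s)`-GBLR. -/
theorem blockSparse_mem_GBLR (n K s : ℕ) (hn : 0 < n) (hK : 0 < K) (hs : 0 < s)
    (hdvd : s ∣ K) (hsn : s ≤ n) (W : Matrix (Fin n) (Fin n) ℝ)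
    (hbs : IsBlockSparse n (K / s) s W) : InGBLR n K s W := by
  obtain ⟨R, w, l, hR, hw, hl, hcover⟩ := hbs.exists_row_sets
  exact blockSparse_mem_GBLR_general hn (hR.trans (Nat.div_mul_le_self K s))
    (fun t => (hw t).trans_lt (by omega)) hl hcover
end

section
/- Let n, s, p be positive integers with n = p·s and let K = p² (so K = (n/s)²). Then every (n, K, s, 1)-block-low-rank real matrix belongs to GBLR(n,K,s). -/
open Matrix BigOperators

/-- The `(i,j)`-th `s × s` block of an `(p·s) × (p·s)` matrix `W`, i.e. the
submatrix `W[i·s:(i+1)·s, j·s:(j+1)·s]`. -/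
def blockOf (p s : ℕ) (W : Matrix (Fin (p * s)) (Fin (p * s)) ℝ) (i j : Fin p) :
    Matrix (Fin s) (Fin s) ℝ :=
  fun a b =>
    W ⟨i.val * s + a.val, by
        calc i.val * s + a.val < i.val * s + s := by omega
          _ = (i.val + 1) * s := by ring
          _ ≤ p * s := Nat.mul_le_mul_right s i.isLt⟩
      ⟨j.val * s + b.val, by
        calc j.val * s + b.val < j.val * s + s := by omega
          _ = (j.val + 1) * s := by ring
          _ ≤ p * s := Nat.mul_le_mul_right s j.isLt⟩

/-- `W` is `(n, p², s, r)`-block-low-rank (`n = p·s`): every `s × s` block in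
the equal partition of `W` has rank at most `r`. -/
noncomputable def IsBLR (p s r : ℕ) (W : Matrix (Fin (p * s)) (Fin (p * s)) ℝ) : Prop :=
  ∀ i j : Fin p, (blockOf p s W i j).rank ≤ r

/-!
A block of rank at most `r` factors as `B * C` with inner dimension `r`, so it is a sum of `r`
rank-one matrices. A boxcar of width `s` placed at a multiple of `s` is the indicator of one block
of indices, so masking these rank-one terms puts each of them back at the position of its block.
Both masks of a term have width `s`, which is exactly the budget `2s` per term.
-/

theorem exists_eq_mul_of_rank_le {𝕜 m n : Type*} [Field 𝕜] [Fintype n] {r : ℕ}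
    {A : Matrix m n 𝕜} (hA : A.rank ≤ r) :
    ∃ (B : Matrix m (Fin r) 𝕜) (C : Matrix (Fin r) n 𝕜), A = B * C := by
  classical
  obtain ⟨f, hf⟩ : ∃ f : A.mulVecLin.range →ₗ[𝕜] (Fin r → 𝕜), Function.Injective f := by
    rwa [← finrank_le_iff_exists_linearMap, Module.finrank_fin_fun]
  obtain ⟨g, hgf⟩ := f.exists_leftInverse_of_injective (LinearMap.ker_eq_bot.mpr hf)
  let B := A.mulVecLin.range.subtype ∘ₗ g
  let C := f ∘ₗ A.mulVecLin.rangeRestrict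
  have hBC : B ∘ₗ C = A.mulVecLin := by
    rw [LinearMap.comp_assoc, ← LinearMap.comp_assoc _ f g, hgf, LinearMap.id_comp]
    rfl
  refine ⟨B.toMatrix', C.toMatrix', ?_⟩
  rw [← LinearMap.toMatrix'_comp, hBC, ← Matrix.toLin'_apply', LinearMap.toMatrix'_toLin']

theorem boxcar_of_add_le {n w l : ℕ} (h : l + w ≤ n) (j : Fin n) :
    boxcar n w l j = if l ≤ j ∧ j < l + w then 1 else 0 := by
  unfold boxcar
  refine if_congr ?_ rfl rfl
  rcases le_or_gt l j with hlj | hjl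
  · rw [Int.emod_eq_of_lt (by omega) (by omega)]
    omega
  · rw [← Int.add_emod_right, Int.emod_eq_of_lt (by omega) (by omega)]
    omega

theorem boxcar_mul_eq_ite_divNat {p s : ℕ} (i : Fin p) (x : Fin (p * s)) :
    boxcar (p * s) s (i * s) x = if x.divNat = i then 1 else 0 := by
  have hs : 0 < s := Nat.pos_of_mul_pos_left x.pos
  have hi : i * s + s ≤ p * s := by
    rw [← Nat.succ_mul]
    exact Nat.mul_le_mul_right s i.isLt
  rw [boxcar_of_add_le hi]
  refine if_congr ?_ rfl rfl
  rw [Fin.ext_iff, Fin.coe_divNat, Nat.div_eq_iff hs]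
  grind

theorem blockOf_divNat_modNat {p s : ℕ} (W : Matrix (Fin (p * s)) (Fin (p * s)) ℝ)
    (x y : Fin (p * s)) :
    blockOf p s W x.divNat y.divNat x.modNat y.modNat = W x y := by
  simp only [blockOf, Fin.coe_divNat, Fin.coe_modNat, Nat.div_add_mod']

theorem eq_sum_vecMulVec_of_blockOf_eq_mul {p s r : ℕ}
    {W : Matrix (Fin (p * s)) (Fin (p * s)) ℝ} {B : Fin p → Fin p → Matrix (Fin s) (Fin r) ℝ}
    {C : Fin p → Fin p → Matrix (Fin r) (Fin s) ℝ} (h : ∀ i j, blockOf p s W i j = B i j * C i j) :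
    W = ∑ k : Fin p × Fin p × Fin r,
      vecMulVec (fun x => boxcar (p * s) s (k.1 * s) x * B k.1 k.2.1 x.modNat k.2.2)
        (fun y => boxcar (p * s) s (k.2.1 * s) y * C k.1 k.2.1 k.2.2 y.modNat) := by
  ext x y
  rw [← blockOf_divNat_modNat W, h, mul_apply]
  simp only [Matrix.sum_apply, vecMulVec_apply, boxcar_mul_eq_ite_divNat, Fintype.sum_prod_type,
    ite_mul, one_mul, zero_mul, mul_ite, mul_zero, Finset.sum_ite_irrel, Finset.sum_const_zero,
    Finset.sum_ite_eq, Finset.mem_univ, if_true]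

theorem InGBLR.of_fintype {ι : Type*} [Fintype ι] {n K s : ℕ} (hK : Fintype.card ι = K)
    {W : Matrix (Fin n) (Fin n) ℝ} {wR wC lR lC : ι → ℕ} {u v : ι → Fin n → ℝ}
    (hwR : ∀ k, wR k ≤ n) (hwC : ∀ k, wC k ≤ n) (hlR : ∀ k, lR k < n) (hlC : ∀ k, lC k < n)
    (hW : W = ∑ k, vecMulVec (fun i => boxcar n (wR k) (lR k) i * u k i)
      (fun j => boxcar n (wC k) (lC k) j * v k j))
    (hw : ∑ k, (wR k + wC k) ≤ 2 * K * s) :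
    InGBLR n K s W := by
  let e : Fin K ≃ ι := (Fintype.equivFinOfCardEq hK).symm
  refine ⟨wR ∘ e, wC ∘ e, lR ∘ e, lC ∘ e, u ∘ e, v ∘ e, fun k => hwR (e k), fun k => hwC (e k),
    fun k => hlR (e k), fun k => hlC (e k), ?_, ?_⟩
  · rw [hW, ← e.sum_comp]
    rfl
  · rwa [← e.sum_comp] at hw

theorem blockLowRank_mem_GBLR_general {p s r : ℕ} (hs : 0 < s)
    {W : Matrix (Fin (p * s)) (Fin (p * s)) ℝ} (hblr : IsBLR p s r W) :
    InGBLR (p * s) (p ^ 2 * r) s W := by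
  choose B C hBC using fun i j => exists_eq_mul_of_rank_le (hblr i j)
  have hwidth (i : Fin p) : s ≤ p * s := Nat.le_mul_of_pos_left s i.pos
  have hloc (i : Fin p) : i * s < p * s := Nat.mul_lt_mul_of_pos_right i.isLt hs
  have hcard : Fintype.card (Fin p × Fin p × Fin r) = p ^ 2 * r := by
    simp only [Fintype.card_prod, Fintype.card_fin]
    ring
  refine InGBLR.of_fintype hcard (fun k => hwidth k.1) (fun k => hwidth k.1)
    (fun k => hloc k.1) (fun k => hloc k.2.1) (eq_sum_vecMulVec_of_blockOf_eq_mul hBC) ?_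
  rw [Finset.sum_const, Finset.card_univ, hcard, smul_eq_mul]
  exact le_of_eq (by ring)

/-- Any `(n, K, s, 1)`-block-low-rank matrix with `n = p·s`, `K = p²` is
`(n,K,s)`-GBLR. -/
theorem blockLowRank_mem_GBLR (p s : ℕ) (hp : 0 < p) (hs : 0 < s)
    (W : Matrix (Fin (p * s)) (Fin (p * s)) ℝ) (hblr : IsBLR p s 1 W) :
    InGBLR (p * s) (p ^ 2) s W := by
  simpa only [mul_one] using blockLowRank_mem_GBLR_general hs hblr
end

section
/- Let n be a positive integer, w ∈ {0,1,...,n} and l ∈ {0,1,...,n−1}. Then the Gaudi mask converges to the boxcar mask as σ → ∞: for every j ∈ {0,...,n−1}, m̃_{(w,l)}^σ[j] tends to m_{(w,l)}[j] as σ tends to +∞ (equivalently, ‖m_{(w,l)} − m̃_{(w,l)}^σ‖₂ → 0 along σ → ∞). -/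
open BigOperators

/-- The normalized sinc function: `sinc x = sin(πx)/(πx)` for `x ≠ 0`, `sinc 0 = 1`. -/
noncomputable def sinc (x : ℝ) : ℝ :=
  if x = 0 then 1 else Real.sin (Real.pi * x) / (Real.pi * x)

/-- The Dirichlet kernel `d_w[k] = w · sinc(wk/n)/sinc(k/n) · e^{iπk(1−w)/n}`. -/
noncomputable def dKer (n w k : ℕ) : ℂ :=
  (w : ℂ) * ((sinc ((w : ℝ) * k / n) / sinc ((k : ℝ) / n) : ℝ) : ℂ)
    * Complex.exp (Complex.I * (Real.pi : ℂ) * (k : ℂ) * (1 - (w : ℂ)) / (n : ℂ))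

/-- The Gaudi (Gaussian-Dirichlet) function `d_w^σ[k] = e^{−k²/(2σ²)} · d_w[k]`. -/
noncomputable def gaudiKer (n w : ℕ) (σ : ℝ) (k : ℕ) : ℂ :=
  (Real.exp (-(k : ℝ) ^ 2 / (2 * σ ^ 2)) : ℝ) * dKer n w k

/-- The Gaudi mask: the inverse discrete Fourier transform of the Gaudi
function modulated by the location `l`:
`m̃_{(w,l)}^σ[j] = (1/n)·∑_{k=0}^{n−1} e^{2πi·jk/n} e^{−2πi·kl/n} d_w^σ[k]`. -/
noncomputable def gaudiMask (n w l : ℕ) (σ : ℝ) : Fin n → ℂ :=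
  fun j => (1 / n : ℂ) * ∑ k ∈ Finset.range n,
    Complex.exp (2 * (Real.pi : ℂ) * Complex.I * (j : ℂ) * (k : ℂ) / (n : ℂ))
      * Complex.exp (-2 * (Real.pi : ℂ) * Complex.I * (k : ℂ) * (l : ℂ) / (n : ℂ))
      * gaudiKer n w σ k

/-!
On `ZMod n` the Dirichlet kernel `d_w` is the discrete Fourier transform of the indicator of
`{0, …, w - 1}`: this is the geometric sum `∑_{m < w} e^{-2imθ} = sin (wθ) / sin θ · e^{iθ(1 - w)}`
at `θ = πk/n`. As `σ → ∞` the Gaussian damping tends to `1` at each of the finitely many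
frequencies, so the Gaudi mask tends to the inverse transform of `d_w` evaluated at `j - l`, and
Fourier inversion identifies that value with the boxcar mask.
-/

section

open Complex Filter Topology
open scoped Real ZMod

theorem sin_mul_sum_exp_eq (θ : ℂ) (w : ℕ) :
    sin θ * ∑ m ∈ Finset.range w, exp (-(2 * θ * m * I)) = sin (w * θ) * exp (θ * (1 - w) * I) := by
  induction w with
  | zero => simp
  | succ w ih =>
    have sin_succ : sin θ * exp (-(w * θ) * I) + sin (w * θ) * exp (θ * I)
        = sin ((w + 1 : ℕ) * θ) := by
      rw [Nat.cast_add_one, add_one_mul, sin_add, exp_mul_I, exp_mul_I, cos_neg, sin_neg]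
      ring
    have exp_last : exp (-(2 * θ * w * I)) = exp (-(w * θ) * I) * exp (-(w * θ) * I) := by
      rw [← exp_add]; ring_nf
    have exp_phase : exp (θ * (1 - w) * I) = exp (θ * I) * exp (-(w * θ) * I) := by
      rw [← exp_add]; ring_nf
    have exp_phase_succ : exp (θ * (1 - (w + 1 : ℕ)) * I) = exp (-(w * θ) * I) := by
      push_cast; ring_nf
    rw [Finset.sum_range_succ, mul_add, ih, ← sin_succ, exp_last, exp_phase, exp_phase_succ]
    ring

theorem pi_mul_mul_sinc (x : ℝ) : π * x * sinc x = Real.sin (π * x) := by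
  rcases eq_or_ne x 0 with rfl | hx
  · simp
  · rw [sinc, if_neg hx, mul_div_cancel₀ _ (mul_ne_zero Real.pi_ne_zero hx)]

theorem mul_sinc_mul_div_sinc (a : ℝ) {x : ℝ} (hx : x ≠ 0) :
    a * (sinc (a * x) / sinc x) = Real.sin (a * (π * x)) / Real.sin (π * x) := by
  have hsin : Real.sin (a * (π * x)) = π * x * (a * sinc (a * x)) := by
    rw [mul_left_comm, ← pi_mul_mul_sinc]; ring
  rw [hsin, ← pi_mul_mul_sinc, mul_div_mul_left _ _ (mul_ne_zero Real.pi_ne_zero hx), mul_div_assoc]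

theorem dKer_eq_sum_exp {n k : ℕ} (w : ℕ) (hk : k < n) :
    dKer n w k = ∑ m ∈ Finset.range w, exp (-(2 * (π * (k / n)) * m * I)) := by
  rcases k.eq_zero_or_pos with rfl | hk₀
  · simp [dKer, sinc]
  have hn : (0 : ℝ) < n := by exact_mod_cast hk₀.trans hk
  have hx : (0 : ℝ) < k / n := by positivity
  have hx₁ : (k / n : ℝ) < 1 := (div_lt_one hn).2 (by exact_mod_cast hk)
  have sin_ne_zero : Real.sin (π * (k / n)) ≠ 0 :=
    (Real.sin_pos_of_pos_of_lt_pi (by positivity) (mul_lt_of_lt_one_right Real.pi_pos hx₁)).ne'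
  have sinc_ratio : (w : ℂ) * ((sinc (w * k / n) / sinc (k / n) : ℝ) : ℂ)
      = sin (w * (π * (k / n))) / sin (π * (k / n)) := by
    rw [mul_div_assoc, ← ofReal_natCast w, ← ofReal_mul, mul_sinc_mul_div_sinc _ hx.ne']
    push_cast
    rfl
  have phase : I * π * k * (1 - w) / n = π * (k / n) * (1 - w) * I := by ring
  rw [dKer, sinc_ratio, phase, div_mul_eq_mul_div, ← sin_mul_sum_exp_eq]
  exact mul_div_cancel_left₀ _ (by simpa using ofReal_ne_zero.2 sin_ne_zero)

theorem sum_zmod_eq_sum_range {M : Type*} [AddCommMonoid M] (n : ℕ) [NeZero n] (f : ZMod n → M) :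
    ∑ x, f x = ∑ k ∈ Finset.range n, f k := by
  refine Finset.sum_bij (fun x _ => x.val) (fun x _ => Finset.mem_range.2 x.val_lt)
    (fun _ _ _ _ h => ZMod.val_injective n h) (fun k hk => ?_) fun x _ => ?_
  · exact ⟨k, Finset.mem_univ _, ZMod.val_natCast_of_lt (Finset.mem_range.1 hk)⟩
  · rw [ZMod.natCast_zmod_val]

/-- The indicator of the residues `0, …, w - 1` in `ZMod n`, i.e. the boxcar mask of width `w` at
location `0`, as a function to which the discrete Fourier transform `𝓕` applies. -/
def zmodBox (n w : ℕ) (x : ZMod n) : ℂ :=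
  if x.val < w then 1 else 0

theorem boxcar_eq_zmodBox {n : ℕ} (w l : ℕ) (j : Fin n) :
    (boxcar n w l j : ℂ) = zmodBox n w ((j : ℕ) - l) := by
  have : NeZero n := j.neZero
  have hval : (((j : ℕ) - l : ZMod n).val : ℤ) = ((j : ℤ) - l) % n := by
    rw [← ZMod.val_intCast]; push_cast; rfl
  rw [boxcar, zmodBox, ← hval]
  simp only [Nat.cast_lt]
  split_ifs <;> simp

theorem dft_zmodBox {n w : ℕ} [NeZero n] (hw : w ≤ n) (y : ZMod n) :
    𝓕 (zmodBox n w) y = ∑ m ∈ Finset.range w, ZMod.stdAddChar (-((m : ZMod n) * y)) := by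
  rw [ZMod.dft_apply, sum_zmod_eq_sum_range]
  refine (Finset.sum_subset_zero_on_sdiff (Finset.range_mono hw) ?_ ?_).symm
  · intro m hm
    obtain ⟨hmn, hmw⟩ := Finset.mem_sdiff.1 hm
    rw [Finset.mem_range] at hmn hmw
    simp [zmodBox, ZMod.val_natCast_of_lt hmn, hmw]
  · intro m hm
    rw [Finset.mem_range] at hm
    simp [zmodBox, ZMod.val_natCast_of_lt (hm.trans_le hw), hm]

theorem dKer_eq_dft_zmodBox {n w k : ℕ} [NeZero n] (hw : w ≤ n) (hk : k < n) :
    dKer n w k = 𝓕 (zmodBox n w) k := by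
  rw [dKer_eq_sum_exp w hk, dft_zmodBox hw]
  refine Finset.sum_congr rfl fun m _ => ?_
  have hchar := ZMod.stdAddChar_coe (N := n) (-(m * k))
  push_cast at hchar
  rw [hchar]
  ring_nf

theorem inv_mul_sum_exp_mul_dKer {n w : ℕ} (hw : w ≤ n) (l : ℕ) (j : Fin n) :
    (1 / n : ℂ) * ∑ k ∈ Finset.range n,
      exp (2 * π * I * j * k / n) * exp (-2 * π * I * k * l / n) * dKer n w k
      = boxcar n w l j := by
  have : NeZero n := j.neZero
  rw [boxcar_eq_zmodBox, ← ZMod.dft.symm_apply_apply (zmodBox n w), ZMod.invDFT_apply,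
    sum_zmod_eq_sum_range, one_div, smul_eq_mul]
  congr 1
  refine Finset.sum_congr rfl fun k hk => ?_
  have hchar := ZMod.stdAddChar_coe (N := n) (k * ((j : ℕ) - l))
  push_cast at hchar
  rw [dKer_eq_dft_zmodBox hw (Finset.mem_range.1 hk), smul_eq_mul, hchar, ← exp_add]
  ring_nf

theorem tendsto_exp_neg_sq_div_atTop (x : ℝ) :
    Tendsto (fun σ : ℝ => Real.exp (-x ^ 2 / (2 * σ ^ 2))) atTop (𝓝 1) := by
  rw [← Real.exp_zero]
  refine (Real.continuous_exp.tendsto 0).comp (tendsto_const_nhds.div_atTop ?_)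
  exact (tendsto_pow_atTop two_ne_zero).const_mul_atTop two_pos

theorem tendsto_gaudiKer (n w k : ℕ) :
    Tendsto (fun σ => gaudiKer n w σ k) atTop (𝓝 (dKer n w k)) := by
  have hgauss := (continuous_ofReal.tendsto 1).comp (tendsto_exp_neg_sq_div_atTop k)
  simpa only [ofReal_one, one_mul, Function.comp_apply, gaudiKer] using
    hgauss.mul_const (dKer n w k)

theorem gaudiMask_tendsto_boxcar_general (n w l : ℕ) (hw : w ≤ n) (j : Fin n) :
    Tendsto (fun σ : ℝ => gaudiMask n w l σ j) atTop (𝓝 (boxcar n w l j : ℂ)) := by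
  rw [← inv_mul_sum_exp_mul_dKer hw]
  exact (tendsto_finsetSum _ fun k _ => (tendsto_gaudiKer n w k).const_mul _).const_mul _

end

/-- The Gaudi mask converges entrywise to the boxcar mask as `σ → ∞`. -/
theorem gaudiMask_tendsto_boxcar (n : ℕ) (hn : 0 < n) (w l : ℕ)
    (hw : w ≤ n) (hl : l < n) (j : Fin n) :
    Filter.Tendsto (fun σ : ℝ => gaudiMask n w l σ j) Filter.atTop
      (nhds ((boxcar n w l j : ℝ) : ℂ)) :=
  gaudiMask_tendsto_boxcar_general n w l hw j
end

section
/- Let n be a positive integer, σ > 0, and w, l real. Regard each entry of the Gaudi mask m̃_{(w,l)}^σ[j] = (1/n)·Σ_{k=0}^{n−1} e^{2πi·jk/n} · e^{−2πi·kl/n} · d_w^σ[k] as a function of the real variable w. Then for every j ∈ {0,...,n−1} and every w ∈ ℝ, the derivative of m̃_{(w,l)}^σ[j] with respect to w equals (1/n)·Σ_{k=0}^{n−1} e^{2πi·jk/n} · e^{−2πi·k(w+l)/n} · e^{iπk/n} · e^{−k²/(2σ²)} / sinc(k/n). -/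
open BigOperators

/-- The Gaudi (Gaussian-Dirichlet) function with real-valued width `w`:
`d_w^σ[k] = e^{−k²/(2σ²)} · w · sinc(wk/n)/sinc(k/n) · e^{iπk(1−w)/n}`. -/
noncomputable def dKerR (n : ℕ) (σ : ℝ) (w : ℝ) (k : ℕ) : ℂ :=
  (Real.exp (-(k : ℝ) ^ 2 / (2 * σ ^ 2)) : ℝ)
    * ((w * sinc (w * k / n) / sinc ((k : ℝ) / n) : ℝ) : ℂ)
    * Complex.exp (Complex.I * (Real.pi : ℂ) * (k : ℂ) * (1 - (w : ℂ)) / (n : ℂ))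

/-- The Gaudi mask with real-valued width `w` and location `l`:
`m̃_{(w,l)}^σ[j] = (1/n)·∑_{k=0}^{n−1} e^{2πi·jk/n} e^{−2πi·kl/n} d_w^σ[k]`. -/
noncomputable def gaudiMaskR (n : ℕ) (σ w l : ℝ) (j : Fin n) : ℂ :=
  (1 / n : ℂ) * ∑ k ∈ Finset.range n,
    Complex.exp (2 * (Real.pi : ℂ) * Complex.I * (j : ℂ) * (k : ℂ) / (n : ℂ))
      * Complex.exp (-2 * (Real.pi : ℂ) * Complex.I * (k : ℂ) * (l : ℂ) / (n : ℂ))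
      * dKerR n σ w k

/-!
The width enters the `k`-th frequency only through `t · sinc (t x) · e^{iπx(1 - t)}` with
`x = k / n`. Since `π x t · sinc (t x) = sin (π x t)`, the derivative of `t · sinc (t x)` is
`cos (π x t)`, so the product rule yields
`(cos (π x t) - i sin (π x t)) · e^{iπx(1 - t)} = e^{iπx(1 - 2t)}`.
-/

lemma pi_mul_self_mul_sinc (x : ℝ) : Real.pi * x * sinc x = Real.sin (Real.pi * x) := by
  by_cases hx : x = 0
  · simp [hx]
  · rw [sinc, if_neg hx, mul_div_cancel₀ _ (mul_ne_zero Real.pi_ne_zero hx)]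

lemma hasDerivAt_mul_sinc_mul (x t : ℝ) :
    HasDerivAt (fun s : ℝ => s * sinc (s * x)) (Real.cos (Real.pi * (t * x))) t := by
  by_cases hx : x = 0
  · simpa [hx, sinc] using hasDerivAt_id' t
  have hπx : Real.pi * x ≠ 0 := mul_ne_zero Real.pi_ne_zero hx
  have sine_quotient (s : ℝ) :
      s * sinc (s * x) = Real.sin (Real.pi * (s * x)) / (Real.pi * x) := by
    rw [← pi_mul_self_mul_sinc, eq_div_iff hπx]
    ring
  have phase_deriv : HasDerivAt (fun s : ℝ => Real.pi * (s * x)) (Real.pi * x) t :=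
    (hasDerivAt_mul_const x).const_mul Real.pi
  simpa only [sine_quotient, mul_div_cancel_right₀ _ hπx] using
    phase_deriv.sin.div_const (Real.pi * x)

lemma hasDerivAt_mul_sinc_mul_cexp (x t : ℝ) :
    HasDerivAt (fun s : ℝ => ((s * sinc (s * x) : ℝ) : ℂ) *
        Complex.exp (Complex.I * Real.pi * x * (1 - s)))
      (Complex.exp (Complex.I * Real.pi * x * (1 - 2 * t))) t := by
  have phase_deriv : HasDerivAt (fun s : ℝ => Complex.I * Real.pi * x * (1 - (s : ℂ)))
      (-(Complex.I * Real.pi * x)) t := by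
    simpa using ((hasDerivAt_id t).ofReal_comp.const_sub 1).const_mul (Complex.I * Real.pi * x)
  have sin_eq : (Real.pi * (t * x) * sinc (t * x) : ℂ) = Complex.sin (Real.pi * (t * x)) :=
    mod_cast congrArg Complex.ofReal (pi_mul_self_mul_sinc (t * x))
  have euler : Complex.exp (-(Complex.I * Real.pi * x * t)) =
      Complex.cos (Real.pi * (t * x)) - Complex.sin (Real.pi * (t * x)) * Complex.I := by
    rw [Complex.cos_sub_sin_I]
    ring_nf
  refine ((hasDerivAt_mul_sinc_mul x t).ofReal_comp.mul phase_deriv.cexp).congr_deriv ?_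
  rw [show Complex.I * Real.pi * x * (1 - 2 * t) =
    -(Complex.I * Real.pi * x * t) + Complex.I * Real.pi * x * (1 - t) by ring,
    Complex.exp_add, euler, ← sin_eq]
  push_cast
  ring

lemma hasDerivAt_dKerR (n : ℕ) (σ w : ℝ) (k : ℕ) :
    HasDerivAt (fun t : ℝ => dKerR n σ t k)
      ((Real.exp (-(k : ℝ) ^ 2 / (2 * σ ^ 2)) : ℝ) / (sinc ((k : ℝ) / n) : ℝ) *
        Complex.exp (Complex.I * Real.pi * k * (1 - 2 * w) / n)) w := by
  have dKerR_eq (t : ℝ) : dKerR n σ t k =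
      (Real.exp (-(k : ℝ) ^ 2 / (2 * σ ^ 2)) : ℝ) / (sinc ((k : ℝ) / n) : ℝ) *
        (((t * sinc (t * (k / n)) : ℝ) : ℂ) *
          Complex.exp (Complex.I * Real.pi * ((k / n : ℝ) : ℂ) * (1 - t))) := by
    rw [dKerR, mul_div_assoc t (k : ℝ) n]
    push_cast
    ring_nf
  simp only [dKerR_eq]
  refine ((hasDerivAt_mul_sinc_mul_cexp (k / n) w).const_mul _).congr_deriv ?_
  push_cast
  ring_nf

/-- Derivative of each Gaudi-mask entry with respect to the (real) width:
`∂/∂w m̃_{(w,l)}^σ[j]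
  = (1/n)·∑_k e^{2πi·jk/n} e^{−2πi·k(w+l)/n} e^{iπk/n} e^{−k²/(2σ²)} / sinc(k/n)`. -/
theorem hasDerivAt_gaudiMaskR_width (n : ℕ) (hn : 0 < n) (σ : ℝ) (hσ : 0 < σ)
    (w l : ℝ) (j : Fin n) :
    HasDerivAt (fun t : ℝ => gaudiMaskR n σ t l j)
      ((1 / n : ℂ) * ∑ k ∈ Finset.range n,
        Complex.exp (2 * (Real.pi : ℂ) * Complex.I * (j : ℂ) * (k : ℂ) / (n : ℂ))
          * Complex.exp (-2 * (Real.pi : ℂ) * Complex.I * (k : ℂ) * ((w : ℂ) + (l : ℂ)) / (n : ℂ))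
          * Complex.exp (Complex.I * (Real.pi : ℂ) * (k : ℂ) / (n : ℂ))
          * ((Real.exp (-(k : ℝ) ^ 2 / (2 * σ ^ 2)) : ℝ) : ℂ)
          / ((sinc ((k : ℝ) / n) : ℝ) : ℂ)) w := by
  refine (HasDerivAt.fun_sum fun k _ => (hasDerivAt_dKerR n σ w k).const_mul _).const_mul _
    |>.congr_deriv ?_
  congr 1
  refine Finset.sum_congr rfl fun k _ => ?_
  have merge_phases :
      Complex.exp (-2 * Real.pi * Complex.I * k * l / n) *
          Complex.exp (Complex.I * Real.pi * k * (1 - 2 * w) / n) =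
        Complex.exp (-2 * Real.pi * Complex.I * k * (w + l) / n) *
          Complex.exp (Complex.I * Real.pi * k / n) := by
    rw [← Complex.exp_add, ← Complex.exp_add]
    ring_nf
  linear_combination Complex.exp (2 * Real.pi * Complex.I * j * k / n) *
    ((Real.exp (-(k : ℝ) ^ 2 / (2 * σ ^ 2)) : ℝ) / (sinc ((k : ℝ) / n) : ℝ)) * merge_phases
end

section
/- Let n be a positive integer, σ > 0, and w, l ∈ [0,n] real. Let g ∈ ℂ^n be the entrywise derivative of the Gaudi mask with respect to the width, i.e. g[j] = (1/n)·Σ_{k=0}^{n−1} e^{2πi·jk/n} · e^{−2πi·k(w+l)/n} · e^{iπk/n} · e^{−k²/(2σ²)} / sinc(k/n), which is the derivative at w of the function w ↦ m̃_{(w,l)}^σ[j] for each j. Then the Euclidean norm of g satisfies ‖g‖₂² = (1/n)·Σ_{k=0}^{n−1} (e^{−k²/(2σ²)}/sinc(k/n))², and in particular ‖g‖₂ ≤ 1/sinc((n−1)/n) < ∞. -/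
open BigOperators

/-!
Up to the factor `1 / n`, `g` is the discrete Fourier transform of the coefficients
`c k = (unimodular phase) * e^{-k²/(2σ²)} / sinc (k/n)`. Orthogonality of the characters of `ℤ/n`
gives Parseval's identity, in which the phases disappear. As the Gaussian is at most `1` and `sinc`
is positive and decreasing on `[0, 1)`, the mean of the squares `|c k|²` is at most
`(1 / sinc ((n - 1) / n))²`.
-/

section Parseval

open Finset

theorem sum_norm_sq_sum_addChar_mul {R 𝕜 : Type*} [CommRing R] [Fintype R] [RCLike 𝕜]
    {ψ : AddChar R 𝕜} (hψ : ψ.IsPrimitive) (c : R → 𝕜) :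
    ∑ x, ‖∑ y, ψ (x * y) * c y‖ ^ 2 = Fintype.card R * ∑ y, ‖c y‖ ^ 2 := by
  classical
  have orthogonality (y z : R) :
      ∑ x, ψ (x * y) * starRingEnd 𝕜 (ψ (x * z)) = if y = z then (Fintype.card R : 𝕜) else 0 := by
    simp_rw [← AddChar.map_neg_eq_conj, ← AddChar.map_add_eq_mul, ← sub_eq_add_neg, ← mul_sub]
    rw [AddChar.sum_mulShift (y - z) hψ]
    simp only [sub_eq_zero, Nat.cast_ite, Nat.cast_zero]
  apply RCLike.ofReal_injective (K := 𝕜)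
  push_cast
  calc ∑ x, (‖∑ y, ψ (x * y) * c y‖ : 𝕜) ^ 2
      = ∑ x, ∑ y, ∑ z, ψ (x * y) * starRingEnd 𝕜 (ψ (x * z)) * (c y * starRingEnd 𝕜 (c z)) := by
        simp_rw [← RCLike.mul_conj, map_sum, map_mul, sum_mul_sum, mul_mul_mul_comm]
    _ = ∑ y, ∑ z, (∑ x, ψ (x * y) * starRingEnd 𝕜 (ψ (x * z))) * (c y * starRingEnd 𝕜 (c z)) := by
        simp_rw [sum_mul]
        rw [sum_comm]
        exact sum_congr rfl fun y _ ↦ sum_comm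
    _ = Fintype.card R * ∑ y, (‖c y‖ : 𝕜) ^ 2 := by
        simp only [orthogonality, ite_mul, zero_mul, sum_ite_eq, mem_univ, if_true,
          RCLike.mul_conj, mul_sum]

theorem sum_zmod_val {M : Type*} [AddCommMonoid M] (n : ℕ) [NeZero n] (f : ℕ → M) :
    ∑ x : ZMod n, f x.val = ∑ k ∈ range n, f k := by
  obtain ⟨m, rfl⟩ := Nat.exists_eq_succ_of_ne_zero (NeZero.ne n)
  exact Fin.sum_univ_eq_sum_range f (m + 1)

theorem sum_norm_sq_sum_exp_mul (n : ℕ) [NeZero n] (c : ℕ → ℂ) :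
    ∑ j ∈ range n, ‖∑ k ∈ range n,
        Complex.exp (2 * Real.pi * Complex.I * j * k / n) * c k‖ ^ 2 =
      n * ∑ k ∈ range n, ‖c k‖ ^ 2 := by
  have stdAddChar_mul (x y : ZMod n) : ZMod.stdAddChar (x * y) =
      Complex.exp (2 * Real.pi * Complex.I * x.val * y.val / n) := by
    have toCircle_mul := ZMod.toCircle_natCast (N := n) (x.val * y.val)
    rw [Nat.cast_mul, ZMod.natCast_zmod_val, ZMod.natCast_zmod_val] at toCircle_mul
    rw [ZMod.stdAddChar_apply, toCircle_mul, Nat.cast_mul, ← mul_assoc]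
  have parseval := sum_norm_sq_sum_addChar_mul (ZMod.isPrimitive_stdAddChar n) (c ·.val)
  simp_rw [stdAddChar_mul, ZMod.card] at parseval
  simpa only [← sum_zmod_val] using parseval

theorem norm_sq_eq_of_forall_eq_sum_exp_mul {n : ℕ} [NeZero n] (c : ℕ → ℂ)
    (g : EuclideanSpace ℂ (Fin n))
    (hg : ∀ j : Fin n, g j = (1 / n : ℂ) * ∑ k ∈ range n,
      Complex.exp (2 * Real.pi * Complex.I * j * k / n) * c k) :
    ‖g‖ ^ 2 = (1 / n : ℝ) * ∑ k ∈ range n, ‖c k‖ ^ 2 := by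
  have hn : (n : ℝ) ≠ 0 := NeZero.ne _
  simp_rw [EuclideanSpace.norm_sq_eq, hg, norm_mul, mul_pow, ← mul_sum]
  rw [Fin.sum_univ_eq_sum_range (fun j ↦ ‖∑ k ∈ range n,
    Complex.exp (2 * Real.pi * Complex.I * j * k / n) * c k‖ ^ 2), sum_norm_sq_sum_exp_mul]
  simp only [norm_div, norm_one, Complex.norm_natCast]
  field_simp

end Parseval

section Sinc

open Set

theorem real_sinc_pos {x : ℝ} (hx : |x| < Real.pi) : 0 < Real.sinc x := by
  wlog hx₀ : 0 ≤ x generalizing x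
  · simpa using this (x := -x) (by rwa [abs_neg]) (by linarith)
  rcases hx₀.eq_or_lt with rfl | hx_pos
  · simp
  · rw [Real.sinc_of_ne_zero hx_pos.ne']
    exact div_pos (Real.sin_pos_of_pos_of_lt_pi hx_pos (lt_of_abs_lt hx)) hx_pos

theorem antitoneOn_real_sinc : AntitoneOn Real.sinc (Icc 0 Real.pi) := by
  intro x hx y hy hxy
  rcases hx.1.eq_or_lt with rfl | hx_pos
  · simpa using Real.sinc_le_one y
  · have hy_pos : 0 < y := hx_pos.trans_le hxy
    have secant_slope_le := strictConcaveOn_sin_Icc.concaveOn.slope_anti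
      (left_mem_Icc.2 Real.pi_pos.le) ⟨hx, hx_pos.ne'⟩ ⟨hy, hy_pos.ne'⟩ hxy
    simpa [slope_def_field, Real.sinc_of_ne_zero, hx_pos.ne', hy_pos.ne'] using secant_slope_le

theorem sinc_eq_real_sinc (x : ℝ) : sinc x = Real.sinc (Real.pi * x) := by
  simp [sinc, Real.sinc_apply, Real.pi_ne_zero]

theorem sinc_pos {x : ℝ} (hx : |x| < 1) : 0 < sinc x := by
  rw [sinc_eq_real_sinc]
  apply real_sinc_pos
  rw [abs_mul, abs_of_pos Real.pi_pos]
  exact mul_lt_of_lt_one_right Real.pi_pos hx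

theorem antitoneOn_sinc : AntitoneOn sinc (Icc 0 1) := by
  have mapsTo : MapsTo (Real.pi * ·) (Icc 0 1) (Icc 0 Real.pi) := fun x hx ↦
    ⟨mul_nonneg Real.pi_pos.le hx.1, mul_le_of_le_one_right Real.pi_pos.le hx.2⟩
  intro x hx y hy hxy
  simp only [sinc_eq_real_sinc]
  exact antitoneOn_real_sinc (mapsTo hx) (mapsTo hy)
    (mul_le_mul_of_nonneg_left hxy Real.pi_pos.le)

theorem abs_div_sinc_le {n k : ℕ} (hk : k < n) {a : ℝ} (ha : |a| ≤ 1) :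
    |a / sinc (k / n)| ≤ 1 / sinc ((n - 1) / n) := by
  have hn : (0 : ℝ) < n := by exact_mod_cast k.zero_le.trans_lt hk
  have hk₀ : (0 : ℝ) ≤ k / n := by positivity
  have hkn : (k : ℝ) / n ≤ (n - 1) / n := by
    have : (k : ℝ) + 1 ≤ n := by exact_mod_cast hk
    gcongr
    linarith
  have hn₁ : ((n : ℝ) - 1) / n < 1 := by rw [div_lt_one hn]; linarith
  have sinc_last_pos : 0 < sinc ((n - 1) / n) := sinc_pos (by rwa [abs_of_nonneg (hk₀.trans hkn)])
  have sinc_last_le : sinc ((n - 1) / n) ≤ sinc (k / n) :=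
    antitoneOn_sinc ⟨hk₀, (hkn.trans_lt hn₁).le⟩ ⟨hk₀.trans hkn, hn₁.le⟩ hkn
  rw [abs_div, abs_of_pos (sinc_last_pos.trans_le sinc_last_le)]
  gcongr

end Sinc

theorem norm_exp_mul_exp_mul_div_sinc (n k : ℕ) (s a : ℝ) :
    ‖Complex.exp (-2 * Real.pi * Complex.I * k * s / n) * Complex.exp (Complex.I * Real.pi * k / n)
      * a / (sinc (k / n) : ℂ)‖ = |a / sinc (k / n)| := by
  have modulation : -2 * Real.pi * Complex.I * k * s / n =
      ((-2 * Real.pi * k * s / n : ℝ) : ℂ) * Complex.I := by push_cast; ring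
  have half_shift : Complex.I * Real.pi * k / n = ((Real.pi * k / n : ℝ) : ℂ) * Complex.I := by
    push_cast; ring
  rw [modulation, half_shift, norm_div, norm_mul, norm_mul, Complex.norm_exp_ofReal_mul_I,
    Complex.norm_exp_ofReal_mul_I, Complex.norm_real, Complex.norm_real, one_mul, one_mul,
    ← norm_div, Real.norm_eq_abs]

theorem abs_exp_neg_sq_div_two_mul_sq_le_one (x σ : ℝ) :
    |Real.exp (-x ^ 2 / (2 * σ ^ 2))| ≤ 1 := by
  rw [Real.abs_exp, Real.exp_le_one_iff, neg_div]
  exact neg_nonpos.2 (by positivity)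

theorem norm_gaudiMask_width_deriv_general {n : ℕ} (hn : 0 < n) (a : ℕ → ℝ)
    (ha : ∀ k < n, |a k| ≤ 1) (w l : ℝ) (g : EuclideanSpace ℂ (Fin n))
    (hg : ∀ j : Fin n, g j = (1 / n : ℂ) * ∑ k ∈ Finset.range n,
      Complex.exp (2 * Real.pi * Complex.I * j * k / n)
        * Complex.exp (-2 * Real.pi * Complex.I * k * (w + l) / n)
        * Complex.exp (Complex.I * Real.pi * k / n) * a k / (sinc (k / n) : ℂ)) :
    ‖g‖ ^ 2 = (1 / n : ℝ) * ∑ k ∈ Finset.range n, (a k / sinc (k / n)) ^ 2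
      ∧ ‖g‖ ≤ 1 / sinc ((n - 1) / n) := by
  have : NeZero n := ⟨hn.ne'⟩
  have norm_sq : ‖g‖ ^ 2 = (1 / n : ℝ) * ∑ k ∈ Finset.range n, |a k / sinc (k / n)| ^ 2 := by
    simp_rw [← norm_exp_mul_exp_mul_div_sinc n _ (w + l)]
    refine norm_sq_eq_of_forall_eq_sum_exp_mul _ g fun j ↦ ?_
    simp only [hg j, Complex.ofReal_add, mul_assoc, mul_div_assoc]
  refine ⟨by simpa only [sq_abs] using norm_sq, le_of_sq_le_sq ?_ ?_⟩
  · calc ‖g‖ ^ 2 = (1 / n : ℝ) * ∑ k ∈ Finset.range n, |a k / sinc (k / n)| ^ 2 := norm_sq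
      _ ≤ (1 / n : ℝ) * ∑ k ∈ Finset.range n, (1 / sinc ((n - 1) / n)) ^ 2 := by
        gcongr with k hk
        exact abs_div_sinc_le (Finset.mem_range.1 hk) (ha k (Finset.mem_range.1 hk))
      _ = (1 / sinc ((n - 1) / n)) ^ 2 := by simp [hn.ne']
  · exact (abs_nonneg _).trans (abs_div_sinc_le hn (ha 0 hn))

/-- Norm of the width-derivative of the Gaudi mask:
`‖g‖₂² = (1/n)·∑_k (e^{−k²/(2σ²)}/sinc(k/n))²` and `‖g‖₂ ≤ 1/sinc((n−1)/n)`. -/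
theorem norm_gaudiMask_width_deriv (n : ℕ) (hn : 0 < n) (σ : ℝ) (hσ : 0 < σ)
    (w l : ℝ) (hw : w ∈ Set.Icc (0 : ℝ) n) (hl : l ∈ Set.Icc (0 : ℝ) n)
    (g : EuclideanSpace ℂ (Fin n))
    (hg : ∀ j : Fin n, g j = (1 / n : ℂ) * ∑ k ∈ Finset.range n,
      Complex.exp (2 * (Real.pi : ℂ) * Complex.I * (j : ℂ) * (k : ℂ) / (n : ℂ))
        * Complex.exp (-2 * (Real.pi : ℂ) * Complex.I * (k : ℂ) * ((w : ℂ) + (l : ℂ)) / (n : ℂ))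
        * Complex.exp (Complex.I * (Real.pi : ℂ) * (k : ℂ) / (n : ℂ))
        * ((Real.exp (-(k : ℝ) ^ 2 / (2 * σ ^ 2)) : ℝ) : ℂ)
        / ((sinc ((k : ℝ) / n) : ℝ) : ℂ)) :
    ‖g‖ ^ 2 = (1 / n : ℝ) * ∑ k ∈ Finset.range n,
        (Real.exp (-(k : ℝ) ^ 2 / (2 * σ ^ 2)) / sinc ((k : ℝ) / n)) ^ 2
      ∧ ‖g‖ ≤ 1 / sinc (((n : ℝ) - 1) / n) :=
  norm_gaudiMask_width_deriv_general hn (fun k ↦ Real.exp (-(k : ℝ) ^ 2 / (2 * σ ^ 2)))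
    (fun k _ ↦ abs_exp_neg_sq_div_two_mul_sq_le_one k σ) w l g hg
end
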